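/- arXiv:2605.26237 — 3 statements merged into one kernel-verified Lean document; each statement's English description precedes it below -/
import Mathlib

section
/- Let α = Σα_iσ_i and β = Σβ_iσ_i be elements of A¹. (a) If α∧β = 0 in A²_{W,k}, then the resonance condition for (α,β) holds at every branch δ ∈ Δ_P of every point P ∈ S. (b) Conversely, if p ∤ d_i for every i ∈ C and the resonance condition for (α,β) holds at every branch of every point of S, then α∧β = 0 in A²_{W,k}. -/
/-!
Contracting `Λ² A_P` against the sum of coordinates gives a boundary map
`∂ : ψ^δ ∧ ψ^δ' ↦ ψ^δ' - ψ^δ`, and `I_P` is exactly the kernel of `∂` as soon as `P` lies on two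
components: modulo the three-term relations, `ψ^δ ↦ [ψ^δ₀ ∧ ψ^δ]` is a left inverse of `∂` for any
base branch `δ₀`. Reading the coefficients of `α ∧ β` at `P` as a flow between the branches, the
`ψ^γ`-coordinate of `∂ (α ∧ β)` is the net flow into `γ`, which by symmetry of the multiplicities
is the left-hand side of the resonance condition at `γ`. When all branches at `P` lie on one
component, all the multiplicities involved vanish. Hence the `A^{2,0}`-part of `α ∧ β` vanishes if
and only if resonance holds everywhere, and `A^{2,∞}` is zero when `p` divides no degree.
-/

open scoped Classical

/-- The weak combinatorial type of a plane projective curve. -/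
structure WeakComb (p : ℕ) where
  /-- the set of irreducible components -/
  C : Type
  [fintypeC : Fintype C]
  [decEqC : DecidableEq C]
  [nonemptyC : Nonempty C]
  /-- the set of singular points -/
  S : Type
  [fintypeS : Fintype S]
  [decEqS : DecidableEq S]
  /-- the local branches at each singular point -/
  Δ : S → Type
  [fintypeΔ : ∀ P, Fintype (Δ P)]
  [decEqΔ : ∀ P, DecidableEq (Δ P)]
  /-- each branch belongs to a component -/
  φ : ∀ P, Δ P → C
  /-- local intersection multiplicities of pairs of branches -/
  μ : ∀ P, Δ P → Δ P → ℕ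
  μ_symm : ∀ P δ δ', φ P δ ≠ φ P δ' → μ P δ δ' = μ P δ' δ
  μ_pos : ∀ P δ δ', φ P δ ≠ φ P δ' → 0 < μ P δ δ'

attribute [instance] WeakComb.fintypeC WeakComb.decEqC WeakComb.nonemptyC
attribute [instance] WeakComb.fintypeS WeakComb.decEqS WeakComb.fintypeΔ WeakComb.decEqΔ

namespace WeakComb

variable {p : ℕ} (W : WeakComb p)

/-- μ_P(δ,δ') with the convention that it vanishes on pairs of branches of the same component. -/
def muk (P : W.S) (δ δ' : W.Δ P) : ℕ :=
  if W.φ P δ = W.φ P δ' then 0 else W.μ P δ δ'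

/-- μ_P(δ, j): the multiplicity of intersection of the branch δ with the component j. -/
def muC (P : W.S) (δ : W.Δ P) (j : W.C) : ℕ :=
  ∑ δ' : W.Δ P, if W.φ P δ' = j then W.muk P δ δ' else 0

/-- A degree assignment: positive degrees satisfying the Bezout condition. -/
def IsDegree (d : W.C → ℕ) : Prop :=
  (∀ i, 0 < d i) ∧
  ∀ i j, i ≠ j →
    d i * d j = ∑ P : W.S, ∑ δ : W.Δ P, if W.φ P δ = i then W.muC P δ j else 0

/-- The basis vector σ_i of A¹ = (C → ZMod p). -/
noncomputable def sigma (i : W.C) : W.C → ZMod p := Pi.single i 1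

/-- The basis vector ψ_P^δ of A_P = (Δ_P → ZMod p). -/
noncomputable def psi (P : W.S) (δ : W.Δ P) : W.Δ P → ZMod p := Pi.single δ 1

/-- ψ_P^δ ∧ ψ_P^δ' as an element of Λ² A_P. -/
noncomputable def psiW (P : W.S) (δ δ' : W.Δ P) : ⋀[ZMod p]^2 (W.Δ P → ZMod p) :=
  ⟨ExteriorAlgebra.ιMulti (ZMod p) 2 ![W.psi P δ, W.psi P δ'],
   ExteriorAlgebra.ιMulti_range (ZMod p) 2 (Set.mem_range_self _)⟩

/-- The subspace I_P of Λ² A_P. -/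
noncomputable def IP (P : W.S) : Submodule (ZMod p) (⋀[ZMod p]^2 (W.Δ P → ZMod p)) :=
  Submodule.span (ZMod p)
    ({x | ∃ δ1 δ2 δ3 : W.Δ P, x = W.psiW P δ1 δ2 + W.psiW P δ2 δ3 + W.psiW P δ3 δ1} ∪
     {x | (∀ δ δ' : W.Δ P, W.φ P δ = W.φ P δ') ∧ ∃ δ1 δ2 : W.Δ P, x = W.psiW P δ1 δ2})

/-- The degree-two part A² = A^{2,0} ⊕ A^{2,∞} of the Combinatorial Aomoto algebra. -/
abbrev A2 (d : W.C → ℕ) : Type :=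
  ((P : W.S) → (⋀[ZMod p]^2 (W.Δ P → ZMod p)) ⧸ W.IP P) ×
  ({i : W.C // p ∣ d i} → ZMod p)

/-- The wedge product A¹ × A¹ → A², extending σ_i ∧ σ_j bilinearly. -/
noncomputable def wedge (d : W.C → ℕ) (α β : W.C → ZMod p) : W.A2 d :=
  (fun P => ∑ δ : W.Δ P, ∑ δ' : W.Δ P,
      (α (W.φ P δ) * β (W.φ P δ') * (W.muk P δ δ' : ZMod p)) •
        Submodule.Quotient.mk (W.psiW P δ δ'),
   fun i => α i.1 * (∑ j : W.C, (d j : ZMod p) * β j)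
          - β i.1 * (∑ j : W.C, (d j : ZMod p) * α j))

/-- The linear map ·∧α : A¹ → A², β ↦ β ∧ α. -/
noncomputable def wedgeL (d : W.C → ℕ) (α : W.C → ZMod p) :
    (W.C → ZMod p) →ₗ[ZMod p] W.A2 d where
  toFun β := W.wedge d β α
  map_add' β γ := by
    refine Prod.ext ?_ ?_
    · funext P
      simp only [wedge, Pi.add_apply, Prod.fst_add]
      rw [← Finset.sum_add_distrib]
      refine Finset.sum_congr rfl fun δ _ => ?_
      rw [← Finset.sum_add_distrib]
      refine Finset.sum_congr rfl fun δ' _ => ?_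
      rw [← add_smul, add_mul, add_mul]
    · funext i
      simp only [wedge, Pi.add_apply, Prod.snd_add]
      rw [show (∑ x : W.C, (d x : ZMod p) * (β x + γ x))
            = (∑ x : W.C, (d x : ZMod p) * β x) + ∑ x : W.C, (d x : ZMod p) * γ x by
        rw [← Finset.sum_add_distrib]; exact Finset.sum_congr rfl fun x _ => by ring]
      ring
  map_smul' c β := by
    refine Prod.ext ?_ ?_
    · funext P
      simp only [wedge, Pi.smul_apply, smul_eq_mul, RingHom.id_apply, Prod.smul_fst]
      rw [Finset.smul_sum]
      refine Finset.sum_congr rfl fun δ _ => ?_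
      rw [Finset.smul_sum]
      refine Finset.sum_congr rfl fun δ' _ => ?_
      rw [smul_smul]
      ring_nf
    · funext i
      simp only [wedge, Pi.smul_apply, smul_eq_mul, RingHom.id_apply, Prod.smul_snd]
      rw [show (∑ x : W.C, (d x : ZMod p) * (c * β x)) = c * ∑ x : W.C, (d x : ZMod p) * β x by
        rw [Finset.mul_sum]; exact Finset.sum_congr rfl fun x _ => by ring]
      ring

/-- The kernel of ·∧α : A¹ → A². -/
noncomputable def wedgeKer (d : W.C → ℕ) (α : W.C → ZMod p) :
    Submodule (ZMod p) (W.C → ZMod p) :=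
  LinearMap.ker (W.wedgeL d α)

/-- H¹ of the Combinatorial Aomoto complex with differential ·∧α. -/
noncomputable abbrev H1 (d : W.C → ℕ) (α : W.C → ZMod p) :=
  (W.wedgeKer d α) ⧸
    (Submodule.comap (W.wedgeKer d α).subtype (Submodule.span (ZMod p) {α}))

end WeakComb

namespace WeakComb

variable {p : ℕ} (W : WeakComb p)

/-- The resonance condition for (α,β) at the branch δ of the point P. -/
def ResCond (α β : W.C → ZMod p) (P : W.S) (δ : W.Δ P) : Prop :=
  β (W.φ P δ) * (∑ j : W.C, (W.muC P δ j : ZMod p) * α j)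
    - α (W.φ P δ) * (∑ j : W.C, (W.muC P δ j : ZMod p) * β j) = 0

/-- P is a p-transversal point for the pair of components i ≠ j. -/
def PTransPoint (P : W.S) (i j : W.C) : Prop :=
  i ≠ j ∧ (∀ δ : W.Δ P, W.φ P δ = i ∨ W.φ P δ = j) ∧
  (∃ δ : W.Δ P, W.φ P δ = i) ∧ (∃ δ : W.Δ P, W.φ P δ = j) ∧
  ((∃ δ : W.Δ P, W.φ P δ = i ∧ ((W.muC P δ j : ZMod p) ≠ 0)) ∨
   (∃ δ : W.Δ P, W.φ P δ = j ∧ ((W.muC P δ i : ZMod p) ≠ 0)))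

/-- The components i and j are p-transversal at a point. -/
def PTransComponents (i j : W.C) : Prop := ∃ P : W.S, W.PTransPoint P i j

/-- α is non-coordinate if all its coordinates are nonzero. -/
def NonCoordinate (α : W.C → ZMod p) : Prop := ∀ i, α i ≠ 0

end WeakComb

/-- The setoid (partition) obtained from s by merging the classes of c₀ and c₁. -/
def mergeSetoid {α : Type*} (s : Setoid α) (c₀ c₁ : α) : Setoid α :=
  Relation.EqvGen.setoid (fun a b => s.r a b ∨ (a = c₀ ∧ b = c₁))

namespace WeakComb

variable {p : ℕ} (W : WeakComb p)

/-- W is p-transversal at P with respect to (α, π), where the surjection π is encoded by the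
setoid s of its fibres; the two classes π(φ_P(Δ_P)) = {i',j'} are those of c₀ and c₁. -/
def PTransversalAt (α : W.C → ZMod p) (s : Setoid W.C) (P : W.S) (c₀ c₁ : W.C) : Prop :=
  ¬ s.r c₀ c₁ ∧
  (∀ δ : W.Δ P, s.r (W.φ P δ) c₀ ∨ s.r (W.φ P δ) c₁) ∧
  (∃ δ : W.Δ P, s.r (W.φ P δ) c₀) ∧ (∃ δ : W.Δ P, s.r (W.φ P δ) c₁) ∧
  ∃ δ : W.Δ P, s.r (W.φ P δ) c₀ ∧
    (∑ δ' : W.Δ P, if s.r (W.φ P δ') c₁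
        then (W.muk P δ δ' : ZMod p) * α (W.φ P δ') else 0) ≠ 0

/-- A p-reduction step with respect to α. -/
def RedStep (α : W.C → ZMod p) (s s' : Setoid W.C) : Prop :=
  ∃ (P : W.S) (c₀ c₁ : W.C), W.PTransversalAt α s P c₀ c₁ ∧ s' = mergeSetoid s c₀ c₁

/-- W is completely p-reductive with respect to α: starting from the identity partition (⊥),
some finite sequence of p-reduction steps reaches the one-class partition (⊤). -/
def CompletelyPReductive (α : W.C → ZMod p) : Prop :=
  Relation.ReflTransGen (W.RedStep α) ⊥ ⊤

/-- β is π-proportional to α, for the surjection π encoded by the setoid s: on each class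
of s, β is a scalar multiple of α. -/
def Proportional (s : Setoid W.C) (α β : W.C → ZMod p) : Prop :=
  ∀ c : W.C, ∃ l : ZMod p, ∀ c', s.r c c' → β c' = l * α c'

end WeakComb

/-- A combinatorial quasi-fiber structure of rank r on W. -/
structure QuasiFiber {p : ℕ} (W : WeakComb p) (r : ℕ) where
  /-- which quasi-fiber each component belongs to -/
  g : W.C → Fin r
  g_surj : Function.Surjective g
  /-- multiplicities of components inside the quasi-fibers -/
  m : W.C → ℕ
  m_pos : ∀ c, 0 < m c
  /-- the set of base points -/
  B : Set W.S
  fiber_off_base : ∀ P : W.S, P ∉ B → ∀ δ δ' : W.Δ P, g (W.φ P δ) = g (W.φ P δ')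

namespace WeakComb

variable {p : ℕ} (W : WeakComb p) {r : ℕ}

/-- M_s(δ) for a branch δ at a base point P. -/
noncomputable def Mcoef (F : QuasiFiber W r) (P : W.S) (δ : W.Δ P) (s : Fin r) : ZMod p :=
  ∑ δ' : W.Δ P,
    if W.φ P δ' ≠ W.φ P δ ∧ F.g (W.φ P δ') = s
      then ((F.m (W.φ P δ') * W.μ P δ δ' : ℕ) : ZMod p) else 0

/-- ω_a = Σ_c m_c · a_{g(c)} · σ_c ∈ A¹. -/
noncomputable def omega (F : QuasiFiber W r) (a : Fin r → ZMod p) : W.C → ZMod p :=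
  fun c => (F.m c : ZMod p) * a (F.g c)

/-- The restricted combinatorics W°_s of the quasi-fiber s. -/
noncomputable def restrict (F : QuasiFiber W r) (s : Fin r) : WeakComb p where
  C := {c : W.C // F.g c = s}
  fintypeC := Fintype.ofFinite _
  decEqC := inferInstance
  nonemptyC := by obtain ⟨c, hc⟩ := F.g_surj s; exact ⟨⟨c, hc⟩⟩
  S := {P : W.S // Nonempty (W.Δ P) ∧ ∀ δ : W.Δ P, F.g (W.φ P δ) = s}
  fintypeS := Fintype.ofFinite _
  decEqS := inferInstance
  Δ := fun P => W.Δ P.1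
  fintypeΔ := fun P => inferInstance
  decEqΔ := fun P => inferInstance
  φ := fun P δ => ⟨W.φ P.1 δ, P.2.2 δ⟩
  μ := fun P δ δ' => W.μ P.1 δ δ'
  μ_symm := fun P δ δ' h => W.μ_symm P.1 δ δ' (fun e => h (Subtype.ext e))
  μ_pos := fun P δ δ' h => W.μ_pos P.1 δ δ' (fun e => h (Subtype.ext e))

/-- The restriction ω_a|_s of ω_a to the restricted combinatorics W°_s. -/
noncomputable def omegaRes (F : QuasiFiber W r) (a : Fin r → ZMod p) (s : Fin r) :
    (W.restrict F s).C → ZMod p :=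
  fun c => (F.m c.1 : ZMod p) * a s

end WeakComb

section Contraction

open CliffordAlgebra exteriorPower Module

variable {R M N ι : Type*} [CommRing R] [AddCommGroup M] [Module R M] [AddCommGroup N] [Module R N]

/-- The contraction `Λ² M → M`, `v ∧ w ↦ f v • w - f w • v`, against a linear form `f`, cut out of
the contraction on the exterior algebra (the Clifford algebra of the zero form). -/
noncomputable def contractTwo (f : Dual R M) : ⋀[R]^2 M →ₗ[R] M :=
  ExteriorAlgebra.ιInv ∘ₗ contractLeft f ∘ₗ (⋀[R]^2 M).subtype

lemma contractTwo_ιMulti (f : Dual R M) (v w : M) :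
    contractTwo f (ιMulti R 2 ![v, w]) = f v • w - f w • v := by
  have h : contractLeft f (ExteriorAlgebra.ιMulti R 2 ![v, w]) =
      ExteriorAlgebra.ι R (f v • w - f w • v) := by
    simp [ExteriorAlgebra.ιMulti_succ_apply, contractLeft_ι_mul, ← Algebra.commutes,
      ← Algebra.smul_def]
  exact (congrArg ExteriorAlgebra.ιInv h).trans (ExteriorAlgebra.ι_leftInverse _)

lemma ιMulti_two_swap (v w : M) : ιMulti R 2 ![w, v] = -ιMulti R 2 ![v, w] := by
  have h := (ιMulti R 2).map_swap ![v, w] (zero_ne_one : (0 : Fin 2) ≠ 1)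
  rwa [show ![v, w] ∘ Equiv.swap 0 1 = ![w, v] by ext i; fin_cases i <;> simp] at h

lemma exteriorPower_two_ext (b : Basis ι R M) {f g : ⋀[R]^2 M →ₗ[R] N}
    (h : ∀ i j, f (ιMulti R 2 ![b i, b j]) = g (ιMulti R 2 ![b i, b j])) : f = g := by
  refine linearMap_ext (b.ext_alternating fun v _ ↦ ?_)
  have hv : (fun i ↦ b (v i)) = ![b (v 0), b (v 1)] := by ext i; fin_cases i <;> rfl
  simpa [hv] using h (v 0) (v 1)

variable (R) in
/-- The submodule of `Λ² M` spanned by the three-term (Orlik–Solomon) relations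
`vᵢ ∧ vⱼ + vⱼ ∧ vₖ + vₖ ∧ vᵢ` among the members of a family `v`. -/
def threeTermRelations (v : ι → M) : Submodule R (⋀[R]^2 M) :=
  Submodule.span R {x | ∃ i j k, x = ιMulti R 2 ![v i, v j] + ιMulti R 2 ![v j, v k] +
    ιMulti R 2 ![v k, v i]}

lemma threeTermRelations_le_ker_contractTwo {f : Dual R M} {v : ι → M} (hf : ∀ i, f (v i) = 1) :
    threeTermRelations R v ≤ LinearMap.ker (contractTwo f) := by
  refine Submodule.span_le.2 ?_
  rintro _ ⟨i, j, k, rfl⟩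
  simp [contractTwo_ιMulti, hf]

lemma mkQ_ιMulti_two_eq_sub (v : ι → M) (i j k : ι) :
    (threeTermRelations R v).mkQ (ιMulti R 2 ![v j, v k]) =
      (threeTermRelations R v).mkQ (ιMulti R 2 ![v i, v k]) -
        (threeTermRelations R v).mkQ (ιMulti R 2 ![v i, v j]) := by
  have h : ιMulti R 2 ![v i, v j] + ιMulti R 2 ![v j, v k] + ιMulti R 2 ![v k, v i] ∈
      threeTermRelations R v := Submodule.subset_span ⟨i, j, k, rfl⟩
  rw [← map_sub, Submodule.mkQ_apply, Submodule.mkQ_apply, Submodule.Quotient.eq]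
  convert h using 1
  rw [ιMulti_two_swap (v i) (v k)]
  abel

theorem ker_contractTwo_sumCoords [Nonempty ι] (b : Basis ι R M) :
    LinearMap.ker (contractTwo b.sumCoords) = threeTermRelations R b := by
  refine le_antisymm (fun x hx ↦ ?_) (threeTermRelations_le_ker_contractTwo b.sumCoords_self_apply)
  obtain ⟨i₀⟩ := ‹Nonempty ι›
  let s := b.constr R fun i ↦ (threeTermRelations R b).mkQ (ιMulti R 2 ![b i₀, b i])
  have hs : s ∘ₗ contractTwo b.sumCoords = (threeTermRelations R b).mkQ :=
    exteriorPower_two_ext b fun i j ↦ by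
      simp only [LinearMap.comp_apply, contractTwo_ιMulti, b.sumCoords_self_apply, one_smul,
        map_sub, s, b.constr_basis, mkQ_ιMulti_two_eq_sub b i₀ i j]
  rw [← (threeTermRelations R b).ker_mkQ, ← hs]
  exact LinearMap.ker_le_ker_comp _ _ hx

end Contraction

lemma sum_sum_smul_sub {ι R M : Type*} [Fintype ι] [Ring R] [AddCommGroup M] [Module R M]
    (c : ι → ι → R) (v : ι → M) :
    ∑ i, ∑ j, c i j • (v j - v i) = ∑ k, (∑ i, c i k - ∑ j, c k j) • v k := by
  simp only [smul_sub, sub_smul, Finset.sum_sub_distrib, Finset.sum_smul]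
  rw [Finset.sum_comm]

namespace WeakComb

variable {p : ℕ} (W : WeakComb p) (d : W.C → ℕ) (α β : W.C → ZMod p) (P : W.S)

lemma muk_comm (δ δ' : W.Δ P) : W.muk P δ δ' = W.muk P δ' δ := by
  by_cases h : W.φ P δ = W.φ P δ'
  · simp [muk, h]
  · simp [muk, h, Ne.symm h, W.μ_symm P δ δ' h]

lemma sum_muC_mul (δ : W.Δ P) :
    ∑ j, (W.muC P δ j : ZMod p) * α j = ∑ δ', (W.muk P δ δ' : ZMod p) * α (W.φ P δ') := by
  simp only [muC, Nat.cast_sum, Nat.cast_ite, Nat.cast_zero, Finset.sum_mul, ite_mul, zero_mul]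
  rw [Finset.sum_comm]
  simp

/-- The coefficient of `[ψ^δ ∧ ψ^δ']` in the component of `α ∧ β` at `P`, viewed as a flow from
`δ` to `δ'`. -/
def wedgeCoeff (δ δ' : W.Δ P) : ZMod p :=
  α (W.φ P δ) * β (W.φ P δ') * (W.muk P δ δ' : ZMod p)

lemma resCond_iff_sum_wedgeCoeff (γ : W.Δ P) :
    W.ResCond α β P γ ↔
      ∑ δ, W.wedgeCoeff α β P δ γ - ∑ δ, W.wedgeCoeff α β P γ δ = 0 := by
  have hin : β (W.φ P γ) * ∑ j, (W.muC P γ j : ZMod p) * α j =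
      ∑ δ, W.wedgeCoeff α β P δ γ := by
    rw [sum_muC_mul, Finset.mul_sum]
    exact Finset.sum_congr rfl fun δ _ ↦ by rw [wedgeCoeff, W.muk_comm P γ δ]; ring
  have hout : α (W.φ P γ) * ∑ j, (W.muC P γ j : ZMod p) * β j =
      ∑ δ, W.wedgeCoeff α β P γ δ := by
    rw [sum_muC_mul, Finset.mul_sum]
    exact Finset.sum_congr rfl fun δ _ ↦ by rw [wedgeCoeff]; ring
  rw [ResCond, hin, hout]

lemma psiW_eq_ιMulti (δ δ' : W.Δ P) :
    W.psiW P δ δ' = exteriorPower.ιMulti (ZMod p) 2 ![W.psi P δ, W.psi P δ'] := rfl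

/-- The basis `ψ_P^δ` of `A_P`, bundled so that its sum of coordinates can be contracted against. -/
noncomputable def psiBasis : Module.Basis (W.Δ P) (ZMod p) (W.Δ P → ZMod p) :=
  Pi.basisFun (ZMod p) (W.Δ P)

lemma coe_psiBasis : ⇑(W.psiBasis P) = W.psi P := by
  ext1 δ
  exact Pi.basisFun_apply (ZMod p) (W.Δ P) δ

/-- The boundary map `Λ² A_P → A_P`, `ψ^δ ∧ ψ^δ' ↦ ψ^δ' - ψ^δ`. -/
noncomputable def boundary : ⋀[ZMod p]^2 (W.Δ P → ZMod p) →ₗ[ZMod p] (W.Δ P → ZMod p) :=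
  contractTwo (W.psiBasis P).sumCoords

lemma boundary_psiW (δ δ' : W.Δ P) :
    W.boundary P (W.psiW P δ δ') = W.psi P δ' - W.psi P δ := by
  rw [psiW_eq_ιMulti, ← coe_psiBasis, boundary, contractTwo_ιMulti]
  simp

theorem IP_eq_ker_boundary (hP : ∃ δ δ', W.φ P δ ≠ W.φ P δ') :
    W.IP P = LinearMap.ker (W.boundary P) := by
  obtain ⟨δ, δ', hδ⟩ := hP
  have : Nonempty (W.Δ P) := ⟨δ⟩
  rw [boundary, ker_contractTwo_sumCoords, coe_psiBasis, IP, threeTermRelations,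
    Set.union_eq_left.2 fun _ h ↦ absurd (h.1 δ δ') hδ]
  rfl

lemma wedge_fst_apply :
    (W.wedge d α β).1 P =
      (W.IP P).mkQ (∑ δ, ∑ δ', W.wedgeCoeff α β P δ δ' • W.psiW P δ δ') := by
  simp [wedge, wedgeCoeff]

lemma boundary_sum_wedgeCoeff :
    W.boundary P (∑ δ, ∑ δ', W.wedgeCoeff α β P δ δ' • W.psiW P δ δ') =
      fun γ ↦ ∑ δ, W.wedgeCoeff α β P δ γ - ∑ δ, W.wedgeCoeff α β P γ δ := by
  simp only [map_sum, map_smul, boundary_psiW, sum_sum_smul_sub]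
  exact (pi_eq_sum_univ' _).symm

theorem wedge_fst_apply_eq_zero_iff :
    (W.wedge d α β).1 P = 0 ↔ ∀ δ, W.ResCond α β P δ := by
  simp only [resCond_iff_sum_wedgeCoeff]
  by_cases hP : ∃ δ δ', W.φ P δ ≠ W.φ P δ'
  · rw [wedge_fst_apply, Submodule.mkQ_apply, Submodule.Quotient.mk_eq_zero,
      W.IP_eq_ker_boundary P hP, LinearMap.mem_ker, boundary_sum_wedgeCoeff, funext_iff]
    rfl
  · push Not at hP
    have hc (δ δ' : W.Δ P) : W.wedgeCoeff α β P δ δ' = 0 := by simp [wedgeCoeff, muk, hP δ δ']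
    simp [wedge_fst_apply, hc]

lemma wedge_snd_eq_zero_iff :
    (W.wedge d α β).2 = 0 ↔
      ∀ i, p ∣ d i → α i * ∑ j, (d j : ZMod p) * β j = β i * ∑ j, (d j : ZMod p) * α j := by
  simp [wedge, funext_iff, sub_eq_zero]

end WeakComb

theorem stmt1_general {p : ℕ} (W : WeakComb p) (d : W.C → ℕ) (α β : W.C → ZMod p) :
    W.wedge d α β = 0 ↔
      (∀ (P : W.S) (δ : W.Δ P), W.ResCond α β P δ) ∧
      ∀ i, p ∣ d i → α i * ∑ j, (d j : ZMod p) * β j = β i * ∑ j, (d j : ZMod p) * α j := by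
  simp only [← W.wedge_fst_apply_eq_zero_iff d, ← W.wedge_snd_eq_zero_iff, Prod.ext_iff,
    funext_iff (f := (W.wedge d α β).1), Prod.fst_zero, Prod.snd_zero, Pi.zero_apply]

section Statements

open WeakComb

variable {p : ℕ} [Fact p.Prime]

/-- Corollary `eq_det`. -/
theorem stmt1 (W : WeakComb p) (d : W.C → ℕ) (hd : W.IsDegree d)
    (α β : W.C → ZMod p) :
    (W.wedge d α β = 0 → ∀ (P : W.S) (δ : W.Δ P), W.ResCond α β P δ) ∧
    ((∀ i : W.C, ¬ p ∣ d i) →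
      (∀ (P : W.S) (δ : W.Δ P), W.ResCond α β P δ) → W.wedge d α β = 0) :=
  ⟨fun h ↦ ((stmt1_general W d α β).1 h).1,
    fun hp h ↦ (stmt1_general W d α β).2 ⟨h, fun i hi ↦ absurd hi (hp i)⟩⟩

end Statements
end

section
/- Let P ∈ S be a point with φ_P(Δ_P) = {i,j}, i ≠ j, and let α,β ∈ A¹ satisfy α∧β = 0 in A²_{W,k}. Then either α_i·β_j − α_j·β_i = 0 in k, or μ_P(δ,j) = 0 in k for every δ ∈ φ_P^{-1}(i) and μ_P(δ′,i) = 0 in k for every δ′ ∈ φ_P^{-1}(j). -/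
/-!
For a branch `δ` at `P`, the alternating form `(v, w) ↦ v_δ (∑ w) - (∑ v) w_δ` on `A_P` takes the
value `[a = δ] - [b = δ]` on `ψ_P^a ∧ ψ_P^b`, so it kills the cyclic relations in `I_P`. If the
branches at `P` lie on at least two components, there are no other relations, the form descends to
`Λ² A_P / I_P`, and its value on the `P`-component of `α ∧ β` is, up to sign, the expression in the
resonance condition at `δ`; with a single component, all multiplicities in that condition vanish.
When only the components `i` and `j` pass through `P` and `δ` lies on `i`, the expression collapses,
again up to sign, to `(α_i β_j - α_j β_i) μ_P(δ, j)`.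
-/

open scoped Classical

namespace WeakComb

variable {p : ℕ} (W : WeakComb p)

lemma muk_comm_s2 (P : W.S) (a b : W.Δ P) : W.muk P a b = W.muk P b a := by
  by_cases h : W.φ P a = W.φ P b
  · simp only [muk, if_pos h, if_pos h.symm]
  · simp only [muk, if_neg h, if_neg (Ne.symm h), W.μ_symm P a b h]

lemma muC_eq_zero {P : W.S} {δ : W.Δ P} {c : W.C}
    (h : ∀ b : W.Δ P, W.φ P b = c → W.φ P δ = c) : W.muC P δ c = 0 := by
  refine Finset.sum_eq_zero fun b _ => ?_
  split_ifs with hb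
  · exact if_pos ((h b hb).trans hb.symm)
  · rfl

lemma sum_muC_mul_s2 {R : Type*} [NonAssocSemiring R] (P : W.S) (δ : W.Δ P) (f : W.C → R) :
    ∑ c, (W.muC P δ c : R) * f c = ∑ b, (W.muk P δ b : R) * f (W.φ P b) := by
  simp only [muC, Nat.cast_sum, Nat.cast_ite, Nat.cast_zero, Finset.sum_mul, ite_mul, zero_mul]
  rw [Finset.sum_comm]
  simp only [Finset.sum_ite_eq, Finset.mem_univ, if_true]

/-- The functional on `Λ² A_P` sending `v ∧ w` to `v_δ (∑ w) - (∑ v) w_δ`, which detects the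
resonance condition at the branch `δ`; it is encoded as the exterior product of the linear forms
`v ↦ v_δ` and `v ↦ ∑ v`. -/
noncomputable def branchForm (P : W.S) (δ : W.Δ P) :
    Module.Dual (ZMod p) (⋀[ZMod p]^2 (W.Δ P → ZMod p)) :=
  exteriorPower.pairingDual (ZMod p) (W.Δ P → ZMod p) 2
    (exteriorPower.ιMulti (ZMod p) 2 ![LinearMap.proj δ, ∑ a, LinearMap.proj a])

lemma branchForm_psiW (P : W.S) (δ a b : W.Δ P) :
    W.branchForm P δ (W.psiW P a b) = (if a = δ then 1 else 0) - (if b = δ then 1 else 0) := by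
  have hψ : W.psiW P a b = exteriorPower.ιMulti (ZMod p) 2 ![W.psi P a, W.psi P b] := rfl
  rw [hψ, branchForm, exteriorPower.pairingDual_ιMulti_ιMulti, Matrix.det_fin_two]
  simp [psi, Pi.single_apply, eq_comm (a := δ)]

lemma branchForm_sum_smul_psiW (P : W.S) (δ : W.Δ P) (m : W.Δ P → W.Δ P → ZMod p) :
    W.branchForm P δ (∑ a, ∑ b, m a b • W.psiW P a b) = ∑ b, m δ b - ∑ a, m a δ := by
  simp only [map_sum, map_smul, branchForm_psiW, smul_eq_mul, mul_sub, mul_ite, mul_one, mul_zero,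
    Finset.sum_sub_distrib, Finset.sum_ite_eq', Finset.mem_univ, if_true]
  rw [Finset.sum_comm]
  simp only [Finset.sum_ite_eq', Finset.mem_univ, if_true]

lemma IP_le_ker_branchForm {P : W.S} (hP : ¬ ∀ a b : W.Δ P, W.φ P a = W.φ P b) (δ : W.Δ P) :
    W.IP P ≤ LinearMap.ker (W.branchForm P δ) := by
  refine Submodule.span_le.2 ?_
  rintro _ (⟨a, b, c, rfl⟩ | ⟨hall, -⟩)
  · simp only [SetLike.mem_coe, LinearMap.mem_ker, map_add, branchForm_psiW]
    ring
  · exact absurd hall hP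

lemma wedge_fst_eq_mk (d : W.C → ℕ) (α β : W.C → ZMod p) (P : W.S) :
    (W.wedge d α β).1 P = Submodule.Quotient.mk (∑ a, ∑ b,
      (α (W.φ P a) * β (W.φ P b) * (W.muk P a b : ZMod p)) • W.psiW P a b) := by
  simp only [wedge, ← Submodule.mkQ_apply, map_sum, map_smul]

theorem resCond_of_wedge_fst_eq_zero {d : W.C → ℕ} {α β : W.C → ZMod p} {P : W.S}
    (h : (W.wedge d α β).1 P = 0) (δ : W.Δ P) : W.ResCond α β P δ := by
  by_cases hP : ∀ a b : W.Δ P, W.φ P a = W.φ P b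
  · have hμ (c : W.C) : W.muC P δ c = 0 := W.muC_eq_zero fun b hb => (hP δ b).trans hb
    simp only [ResCond, hμ, Nat.cast_zero, zero_mul, Finset.sum_const_zero, mul_zero, sub_zero]
  · rw [wedge_fst_eq_mk, Submodule.Quotient.mk_eq_zero] at h
    have hform := LinearMap.mem_ker.1 (W.IP_le_ker_branchForm hP δ h)
    rw [branchForm_sum_smul_psiW, ← neg_eq_zero, neg_sub] at hform
    rw [ResCond, sum_muC_mul_s2, sum_muC_mul_s2, ← hform, Finset.mul_sum, Finset.mul_sum]
    congr 1
    · exact Finset.sum_congr rfl fun a _ => by rw [W.muk_comm_s2 P a δ]; ring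
    · exact Finset.sum_congr rfl fun b _ => by ring

lemma resCond_iff_minor_mul_muC_eq_zero {P : W.S} {i j : W.C}
    (him : ∀ δ : W.Δ P, W.φ P δ = i ∨ W.φ P δ = j) (α β : W.C → ZMod p)
    {δ : W.Δ P} (hδ : W.φ P δ = i) :
    W.ResCond α β P δ ↔ (α i * β j - α j * β i) * (W.muC P δ j : ZMod p) = 0 := by
  have hμ {c : W.C} (hc : c ≠ j) : W.muC P δ c = 0 := W.muC_eq_zero fun b hb =>
    hδ.trans (((him b).resolve_right fun hbj => hc (hb.symm.trans hbj)).symm.trans hb)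
  have hsum (γ : W.C → ZMod p) : ∑ c, (W.muC P δ c : ZMod p) * γ c = W.muC P δ j * γ j :=
    Fintype.sum_eq_single j fun c hc => by rw [hμ hc, Nat.cast_zero, zero_mul]
  rw [ResCond, hsum, hsum, hδ, ← neg_eq_zero]
  ring_nf

end WeakComb

theorem stmt2_general {p : ℕ} (W : WeakComb p) (d : W.C → ℕ) (P : W.S) (i j : W.C)
    (him : ∀ δ : W.Δ P, W.φ P δ = i ∨ W.φ P δ = j)
    (α β : W.C → ZMod p) (h : (W.wedge d α β).1 P = 0) :
    (∀ δ : W.Δ P, W.φ P δ = i → (α i * β j - α j * β i) * (W.muC P δ j : ZMod p) = 0) ∧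
    (∀ δ : W.Δ P, W.φ P δ = j → (α i * β j - α j * β i) * (W.muC P δ i : ZMod p) = 0) := by
  have hres (δ : W.Δ P) : W.ResCond α β P δ := W.resCond_of_wedge_fst_eq_zero h δ
  refine ⟨fun δ hδ => (W.resCond_iff_minor_mul_muC_eq_zero him α β hδ).1 (hres δ),
    fun δ hδ => ?_⟩
  have hminor := (W.resCond_iff_minor_mul_muC_eq_zero (fun b => (him b).symm) α β hδ).1 (hres δ)
  linear_combination -hminor

section Statements

open WeakComb

variable {p : ℕ} [Fact p.Prime]

/-- Corollary `double_points`. -/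
theorem stmt2 (W : WeakComb p) (d : W.C → ℕ) (hd : W.IsDegree d)
    (P : W.S) (i j : W.C) (hij : i ≠ j)
    (him : ∀ δ : W.Δ P, W.φ P δ = i ∨ W.φ P δ = j)
    (hi : ∃ δ : W.Δ P, W.φ P δ = i) (hj : ∃ δ : W.Δ P, W.φ P δ = j)
    (α β : W.C → ZMod p) (h : W.wedge d α β = 0) :
    α i * β j - α j * β i = 0 ∨
    ((∀ δ : W.Δ P, W.φ P δ = i → (W.muC P δ j : ZMod p) = 0) ∧
     (∀ δ : W.Δ P, W.φ P δ = j → (W.muC P δ i : ZMod p) = 0)) := by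
  obtain ⟨hμi, hμj⟩ := stmt2_general W d P i j him α β (congrFun (congrArg Prod.fst h) P)
  exact or_iff_not_imp_left.2 fun hm => ⟨fun δ hδ => (mul_eq_zero.1 (hμi δ hδ)).resolve_left hm,
    fun δ hδ => (mul_eq_zero.1 (hμj δ hδ)).resolve_left hm⟩

end Statements
end

section
/- Suppose there is a surjection g : C → {1,…,r} with r ≥ 3 such that for every P ∈ S, the set g(φ_P(Δ_P)) is either a singleton or equals all of {1,…,r}. Then W is not completely p-reductive with respect to any α ∈ A¹. (This is the combinatorial form of: a plane curve that is the union of r ≥ 3 fibers of a pencil of curves is not completely p-reductive for any prime p.) -/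
/-!
If every partition class lies in a fiber of `g`, then at a transversal point, whose branches meet
exactly two classes `c₀` and `c₁`, the values of `g` are exactly `g c₀` and `g c₁`. When `g` never
takes exactly two values at a point, `g c₀ = g c₁`, so merging the two classes stays inside a fiber
of `g`. Hence all partitions reached from the discrete one refine the fibers of `g`, and the
one-class partition is out of reach as soon as `g` is not constant.
-/

open scoped Classical

section Statements

open WeakComb

variable {p : ℕ} [Fact p.Prime]

theorem mergeSetoid_le_iff {α : Type*} {s t : Setoid α} {a b : α} :
    mergeSetoid s a b ≤ t ↔ s ≤ t ∧ t a b := by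
  constructor
  · intro h
    exact ⟨fun _ _ hxy => h (.rel _ _ (.inl hxy)), h (.rel _ _ (.inr ⟨rfl, rfl⟩))⟩
  · rintro ⟨hst, hab⟩
    refine Setoid.eqvGen_le fun x y hxy => ?_
    rcases hxy with hxy | ⟨rfl, rfl⟩
    · exact hst hxy
    · exact hab

theorem encard_range_ne_two_of_const_or_surjective {ι T : Type*} (hT : ENat.card T ≠ 2)
    {f : ι → T} (hf : (∀ i j, f i = f j) ∨ Function.Surjective f) :
    (Set.range f).encard ≠ 2 := by
  rcases hf with hconst | hsurj
  · have hsub : (Set.range f).Subsingleton := by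
      rintro _ ⟨i, rfl⟩ _ ⟨j, rfl⟩
      exact hconst i j
    exact ((Set.encard_le_one_iff_subsingleton.mpr hsub).trans_lt (by norm_num)).ne
  · rwa [hsurj.range_eq, Set.encard_univ]

namespace WeakComb

variable {p : ℕ} {W : WeakComb p} {α : W.C → ZMod p} {s s' : Setoid W.C} {T : Type*} {g : W.C → T}

theorem PTransversalAt.range_eq_pair {P : W.S} {c₀ c₁ : W.C} (h : W.PTransversalAt α s P c₀ c₁)
    (hs : s ≤ Setoid.ker g) : Set.range (g ∘ W.φ P) = {g c₀, g c₁} := by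
  obtain ⟨-, hclasses, ⟨δ₀, hδ₀⟩, ⟨δ₁, hδ₁⟩, -⟩ := h
  apply Set.Subset.antisymm
  · rintro _ ⟨δ, rfl⟩
    exact (hclasses δ).imp (fun hδ => hs hδ) (fun hδ => hs hδ)
  · rintro _ (rfl | rfl)
    · exact ⟨δ₀, hs hδ₀⟩
    · exact ⟨δ₁, hs hδ₁⟩

theorem RedStep.le_ker (h : W.RedStep α s s')
    (hpencil : ∀ P, (Set.range (g ∘ W.φ P)).encard ≠ 2) (hs : s ≤ Setoid.ker g) :
    s' ≤ Setoid.ker g := by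
  obtain ⟨P, c₀, c₁, htrans, rfl⟩ := h
  refine mergeSetoid_le_iff.mpr ⟨hs, ?_⟩
  by_contra hne
  apply hpencil P
  rw [htrans.range_eq_pair hs, Set.encard_pair hne]

theorem le_ker_of_reflTransGen_redStep (h : Relation.ReflTransGen (W.RedStep α) ⊥ s)
    (hpencil : ∀ P, (Set.range (g ∘ W.φ P)).encard ≠ 2) : s ≤ Setoid.ker g := by
  induction h with
  | refl => exact bot_le
  | tail _ hstep ih => exact hstep.le_ker hpencil ih

end WeakComb

theorem stmt9_general {p : ℕ} (W : WeakComb p) {T : Type*} (g : W.C → T)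
    (hg : (Set.range g).Nontrivial) (hpencil : ∀ P, (Set.range (g ∘ W.φ P)).encard ≠ 2)
    (α : W.C → ZMod p) : ¬ W.CompletelyPReductive α := by
  intro hred
  obtain ⟨_, ⟨a, rfl⟩, _, ⟨b, rfl⟩, hab⟩ := hg
  have hle : ⊤ ≤ Setoid.ker g := le_ker_of_reflTransGen_redStep hred hpencil
  exact hab (hle trivial)

/-- unions of at least three fibers of a pencil are never
completely p-reductive. -/
theorem stmt9 (W : WeakComb p) (r : ℕ) (hr : 3 ≤ r)
    (g : W.C → Fin r) (hg : Function.Surjective g)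
    (hpencil : ∀ P : W.S,
      (∀ δ δ' : W.Δ P, g (W.φ P δ) = g (W.φ P δ')) ∨
      (∀ s : Fin r, ∃ δ : W.Δ P, g (W.φ P δ) = s)) :
    ∀ α : W.C → ZMod p, ¬ W.CompletelyPReductive α := by
  have : Nontrivial (Fin r) := Fin.nontrivial_iff_two_le.mpr (by lia)
  have hcard : ENat.card (Fin r) ≠ 2 := by simpa using mod_cast (by lia : r ≠ 2)
  exact stmt9_general W g (hg.range_eq ▸ Set.nontrivial_univ)
    fun P => encard_range_ne_two_of_const_or_surjective hcard (hpencil P)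

end Statements
end
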